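/- Let ⟨α,α'⟩ and ⟨β,β'⟩ be (m,n)-shuffles with ⟨α,α'⟩ < ⟨β,β'⟩. Then there exists an immediate predecessor ⟨γ,γ'⟩ of ⟨β,β'⟩ with ⟨α,α'⟩ ≤ ⟨γ,γ'⟩; equivalently, there exists j ∈ ⌞⟨β,β'⟩ with β(j) > α(j), and the shuffle obtained from β by decreasing its value at j by 1 (and leaving all other values unchanged) is an immediate predecessor of ⟨β,β'⟩ lying above ⟨α,α'⟩. -/

import Mathlib

/-- Extend a map `Fin (N+1) → Fin (M+1)` to a `ℕ`-valued map on all of `ℕ`,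
clamping the input to the range `{0, …, N}`. -/
def extendFin {N M : ℕ} (f : Fin (N + 1) → Fin (M + 1)) (i : ℕ) : ℕ :=
  (f ⟨min i N, Nat.lt_succ_of_le (min_le_right i N)⟩ : ℕ)

/-- `⟨α, α'⟩` is an `(m,n)`-shuffle: both maps are monotone surjections and
`α i + α' i = i` for all `i`. -/
def IsShuffle (m n : ℕ) (α : Fin (m + n + 1) → Fin (m + 1))
    (α' : Fin (m + n + 1) → Fin (n + 1)) : Prop :=
  Monotone α ∧ Monotone α' ∧ Function.Surjective α ∧ Function.Surjective α' ∧
    ∀ i : Fin (m + n + 1), (α i : ℕ) + (α' i : ℕ) = (i : ℕ)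

/-- The pointwise order on `(m,n)`-shuffles (a shuffle is determined by its
first component). -/
def ShuffleLE (m n : ℕ) (α β : Fin (m + n + 1) → Fin (m + 1)) : Prop :=
  ∀ i, α i ≤ β i

/-- The strict pointwise order on `(m,n)`-shuffles. -/
def ShuffleLT (m n : ℕ) (α β : Fin (m + n + 1) → Fin (m + 1)) : Prop :=
  ShuffleLE m n α β ∧ α ≠ β

/-- The lower-right corner set `⌞⟨α,α'⟩`: all `i` with `1 ≤ i ≤ m+n-1` such that
`α(i+1) = α(i) = α(i-1)+1`. -/
def lrCorner (m n : ℕ) (α : Fin (m + n + 1) → Fin (m + 1)) : Set ℕ :=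
  {i | 1 ≤ i ∧ i + 1 ≤ m + n ∧
    extendFin α (i + 1) = extendFin α i ∧ extendFin α i = extendFin α (i - 1) + 1}

/-- The upper-left corner set `⌜⟨α,α'⟩`: all `i` with `1 ≤ i ≤ m+n-1` such that
`α(i+1) = α(i)+1 = α(i-1)+1`. -/
def ulCorner (m n : ℕ) (α : Fin (m + n + 1) → Fin (m + 1)) : Set ℕ :=
  {i | 1 ≤ i ∧ i + 1 ≤ m + n ∧
    extendFin α (i + 1) = extendFin α i + 1 ∧ extendFin α i = extendFin α (i - 1)}

/-- `⟨β,β'⟩` is an immediate predecessor of `⟨α,α'⟩`: it is a shuffle, `β < α`,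
and no shuffle lies strictly between them. -/
def IsImmPred (m n : ℕ)
    (β : Fin (m + n + 1) → Fin (m + 1)) (β' : Fin (m + n + 1) → Fin (n + 1))
    (α : Fin (m + n + 1) → Fin (m + 1)) (α' : Fin (m + n + 1) → Fin (n + 1)) : Prop :=
  IsShuffle m n β β' ∧ ShuffleLT m n β α ∧
    ∀ (γ : Fin (m + n + 1) → Fin (m + 1)) (γ' : Fin (m + n + 1) → Fin (n + 1)),
      IsShuffle m n γ γ' → ¬ (ShuffleLT m n β γ ∧ ShuffleLT m n γ α)

/-- `⟨γ,γ'⟩` is an immediate successor of `⟨α,α'⟩`: it is a shuffle, `α < γ`,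
and no shuffle lies strictly between them. -/
def IsImmSucc (m n : ℕ)
    (γ : Fin (m + n + 1) → Fin (m + 1)) (γ' : Fin (m + n + 1) → Fin (n + 1))
    (α : Fin (m + n + 1) → Fin (m + 1)) (α' : Fin (m + n + 1) → Fin (n + 1)) : Prop :=
  IsShuffle m n γ γ' ∧ ShuffleLT m n α γ ∧
    ∀ (δ : Fin (m + n + 1) → Fin (m + 1)) (δ' : Fin (m + n + 1) → Fin (n + 1)),
      IsShuffle m n δ δ' → ¬ (ShuffleLT m n α δ ∧ ShuffleLT m n δ γ)

/-!
Read a shuffle as a lattice path from `(0, 0)` to `(m, n)`. Among the indices `i` with `α i < β i`,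
take `j` maximizing `β j - β' j`, a quantity that changes by `±1` at each step. If `β` did not
rise from `j - 1` to `j`, or did rise from `j` to `j + 1`, then that neighbour of `j` would again
satisfy `α < β` and have a larger `β - β'`; hence `j` is a lower-right corner. Replacing `β j` by
`β (j - 1)` and `β' j` by `β' (j + 1)` flattens this corner, and the result is covered by `β` even
among all functions, not just among shuffles.
-/

section Update

variable {ι κ : Type*} {f : ι → κ}

theorem monotone_update_pred [PartialOrder ι] [PredOrder ι] [DecidableEq ι] [Preorder κ]
    (hf : Monotone f) (j : ι) : Monotone (Function.update f j (f (Order.pred j))) := by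
  refine monotone_iff_forall_lt.2 fun a b hab => ?_
  rcases eq_or_ne a j with rfl | haj
  · rw [Function.update_self, Function.update_of_ne hab.ne']
    exact hf ((Order.pred_le a).trans hab.le)
  rcases eq_or_ne b j with rfl | hbj
  · rw [Function.update_self, Function.update_of_ne haj]
    exact hf (Order.le_pred_of_lt hab)
  · rw [Function.update_of_ne haj, Function.update_of_ne hbj]
    exact hf hab.le

theorem monotone_update_succ [PartialOrder ι] [SuccOrder ι] [DecidableEq ι] [Preorder κ]
    (hf : Monotone f) (j : ι) : Monotone (Function.update f j (f (Order.succ j))) :=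
  (monotone_update_pred (ι := ιᵒᵈ) (κ := κᵒᵈ) hf.dual j).dual

theorem surjective_update_of_apply_eq [DecidableEq ι] {j k : ι} (hf : Function.Surjective f)
    (hkj : k ≠ j) (hfk : f k = f j) (v : κ) : Function.Surjective (Function.update f j v) := by
  intro w
  obtain ⟨i, rfl⟩ := hf w
  rcases eq_or_ne i j with rfl | hij
  · exact ⟨k, by rw [Function.update_of_ne hkj, hfk]⟩
  · exact ⟨i, Function.update_of_ne hij _ _⟩

end Update

section FinSuccPred

variable {N M : ℕ}

theorem covBy_iff_val_add_one_eq {i k : Fin N} : i ⋖ k ↔ i.val + 1 = k.val :=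
  Fin.covBy_iff.trans Nat.covBy_iff_add_one_eq

theorem val_orderSucc (i : Fin (N + 1)) : (Order.succ i).val = min (i.val + 1) N := by
  cases i using Fin.lastCases with
  | last => simp
  | cast i => simp

theorem val_orderPred (i : Fin (N + 1)) : (Order.pred i).val = i.val - 1 := by
  cases i using Fin.cases <;> simp

theorem extendFin_val (f : Fin (N + 1) → Fin (M + 1)) (i : Fin (N + 1)) :
    extendFin f i = f i :=
  congrArg (fun k => (f k : ℕ)) (Fin.ext (min_eq_left i.is_le))

theorem extendFin_val_add_one (f : Fin (N + 1) → Fin (M + 1)) (i : Fin (N + 1)) :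
    extendFin f (i + 1) = f (Order.succ i) :=
  congrArg (fun k => (f k : ℕ)) (Fin.ext (val_orderSucc i).symm)

theorem extendFin_val_sub_one (f : Fin (N + 1) → Fin (M + 1)) (i : Fin (N + 1)) :
    extendFin f (i - 1) = f (Order.pred i) := by
  rw [← val_orderPred, extendFin_val]

end FinSuccPred

section Shuffle

variable {m n : ℕ} {α β : Fin (m + n + 1) → Fin (m + 1)} {α' β' : Fin (m + n + 1) → Fin (n + 1)}

theorem shuffleLT_iff_lt : ShuffleLT m n α β ↔ α < β :=
  (lt_iff_le_and_ne (a := α) (b := β)).symm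

theorem mem_lrCorner_iff {j : Fin (m + n + 1)} :
    (j : ℕ) ∈ lrCorner m n α ↔
      ¬IsMax j ∧ α (Order.succ j) = α j ∧ (α j : ℕ) = α (Order.pred j) + 1 := by
  have one_le (h : (α j : ℕ) = α (Order.pred j) + 1) : 1 ≤ j.val := by
    by_contra hj
    have hpred : Order.pred j = j := Fin.ext (by rw [val_orderPred]; omega)
    rw [hpred] at h
    omega
  have not_isMax : ¬IsMax j ↔ j.val + 1 ≤ m + n := by
    rw [isMax_iff_eq_top, Fin.ext_iff, Fin.val_top]
    omega
  simp only [lrCorner, Set.mem_ofPred_eq, extendFin_val_add_one, extendFin_val,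
    extendFin_val_sub_one, not_isMax, Fin.ext_iff]
  tauto

theorem update_covBy_of_mem_lrCorner {j : Fin (m + n + 1)} (hj : (j : ℕ) ∈ lrCorner m n β) :
    Function.update β j (β (Order.pred j)) ⋖ β := by
  have hcov : β (Order.pred j) ⋖ β j :=
    covBy_iff_val_add_one_eq.2 (mem_lrCorner_iff.1 hj).2.2.symm
  exact Pi.covBy_iff_exists_left_eq.2 ⟨j, _, hcov, rfl⟩

namespace IsShuffle

theorem val_add_val (hα : IsShuffle m n α α') (i : Fin (m + n + 1)) :
    (α i : ℕ) + α' i = i :=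
  hα.2.2.2.2 i

theorem apply_bot (hα : IsShuffle m n α α') : α ⊥ = ⊥ :=
  Fin.ext (Nat.eq_zero_of_add_eq_zero_right (hα.val_add_val ⊥))

theorem apply_top (hα : IsShuffle m n α α') : α ⊤ = ⊤ := by
  have hsum : (α ⊤ : ℕ) + α' ⊤ = m + n := hα.val_add_val ⊤
  exact Fin.ext (by rw [Fin.val_top]; omega)

theorem val_eq_or_eq_add_one_of_covBy (hα : IsShuffle m n α α') {i k : Fin (m + n + 1)}
    (hik : i ⋖ k) : (α k : ℕ) = α i ∨ (α k : ℕ) = α i + 1 := by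
  have hle : (α i : ℕ) ≤ α k := hα.1 hik.le
  have hle' : (α' i : ℕ) ≤ α' k := hα.2.1 hik.le
  have hval : (i : ℕ) + 1 = k := covBy_iff_val_add_one_eq.1 hik
  have := hα.val_add_val i
  have := hα.val_add_val k
  omega

theorem update_of_mem_lrCorner (hβ : IsShuffle m n β β') {j : Fin (m + n + 1)}
    (hj : (j : ℕ) ∈ lrCorner m n β) :
    IsShuffle m n (Function.update β j (β (Order.pred j)))
      (Function.update β' j (β' (Order.succ j))) := by
  obtain ⟨hmono, hmono', hsurj, hsurj', hval⟩ := hβ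
  obtain ⟨hj_max, hsucc, hpred⟩ := mem_lrCorner_iff.1 hj
  have hj_min : ¬IsMin j := fun h => by
    rw [h.pred_eq] at hpred
    omega
  have hval_pred : (Order.pred j).val + 1 = j :=
    covBy_iff_val_add_one_eq.1 (Order.pred_covBy_of_not_isMin hj_min)
  have hval_succ : j.val + 1 = (Order.succ j).val :=
    covBy_iff_val_add_one_eq.1 (Order.covBy_succ_of_not_isMax hj_max)
  have hsum := hval j
  have hsum_pred := hval (Order.pred j)
  have hsum_succ := hval (Order.succ j)
  have hpred' : β' (Order.pred j) = β' j := Fin.ext (by omega)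
  refine ⟨monotone_update_pred hmono j, monotone_update_succ hmono' j,
    surjective_update_of_apply_eq hsurj (Order.lt_succ_of_not_isMax hj_max).ne' hsucc _,
    surjective_update_of_apply_eq hsurj' (Order.pred_lt_of_not_isMin hj_min).ne hpred' _,
    fun k => ?_⟩
  rcases eq_or_ne k j with rfl | hkj
  · rw [Function.update_self, Function.update_self]
    rw [hsucc] at hsum_succ
    omega
  · rw [Function.update_of_ne hkj, Function.update_of_ne hkj, hval]

theorem isImmPred_of_covBy (hα : IsShuffle m n α α') (hαβ : α ⋖ β) :
    IsImmPred m n α α' β β' :=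
  ⟨hα, shuffleLT_iff_lt.2 hαβ.lt, fun _ _ _ h =>
    hαβ.2 (shuffleLT_iff_lt.1 h.1) (shuffleLT_iff_lt.1 h.2)⟩

end IsShuffle

theorem exists_mem_lrCorner_lt (hα : IsShuffle m n α α') (hβ : IsShuffle m n β β')
    (hβα : ¬β ≤ α) : ∃ j : Fin (m + n + 1), (j : ℕ) ∈ lrCorner m n β ∧ α j < β j := by
  have hne : ∃ i, α i < β i := by
    simpa only [Pi.le_def, not_forall, not_le] using hβα
  obtain ⟨j, hj, hj_max⟩ :=
    Set.exists_max_image {i | α i < β i} (fun i => (β i : ℤ) - β' i) (Set.toFinite _) hne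
  have not_isMin : ¬IsMin j := by
    rw [isMin_iff_eq_bot]
    rintro rfl
    exact not_lt_bot (hj.trans_eq hβ.apply_bot)
  have not_isMax : ¬IsMax j := by
    rw [isMax_iff_eq_top]
    rintro rfl
    exact not_top_lt (hα.apply_top.symm.trans_lt hj)
  have hsum := hβ.val_add_val j
  refine ⟨j, mem_lrCorner_iff.2 ⟨not_isMax, ?_, ?_⟩, hj⟩
  · have hcov := Order.covBy_succ_of_not_isMax not_isMax
    refine Fin.ext ((hβ.val_eq_or_eq_add_one_of_covBy hcov).resolve_right fun hrise => ?_)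
    have hlt : α (Order.succ j) < β (Order.succ j) := by
      have := hα.val_eq_or_eq_add_one_of_covBy hcov
      have : (α j : ℕ) < β j := hj
      exact Fin.lt_def.2 (by omega)
    have := hj_max _ hlt
    have := hβ.val_add_val (Order.succ j)
    have := covBy_iff_val_add_one_eq.1 hcov
    omega
  · have hcov := Order.pred_covBy_of_not_isMin not_isMin
    refine (hβ.val_eq_or_eq_add_one_of_covBy hcov).resolve_left fun hconst => ?_
    have hlt : α (Order.pred j) < β (Order.pred j) :=
      (hα.1 hcov.le).trans_lt (hj.trans_eq (Fin.ext hconst))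
    have := hj_max _ hlt
    have := hβ.val_add_val (Order.pred j)
    have := covBy_iff_val_add_one_eq.1 hcov
    omega

end Shuffle

/-- If `⟨α,α'⟩ < ⟨β,β'⟩` are shuffles then there is `j` in the lower-right corner
set of `⟨β,β'⟩` with `β j > α j`, and the shuffle obtained from `β` by decreasing
its value at `j` by one (leaving all other values unchanged) is an immediate
predecessor of `⟨β,β'⟩` lying above `⟨α,α'⟩`. -/
theorem exists_immPred_above (m n : ℕ)
    (α : Fin (m + n + 1) → Fin (m + 1)) (α' : Fin (m + n + 1) → Fin (n + 1))
    (β : Fin (m + n + 1) → Fin (m + 1)) (β' : Fin (m + n + 1) → Fin (n + 1))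
    (hα : IsShuffle m n α α') (hβ : IsShuffle m n β β')
    (hlt : ShuffleLT m n α β) :
    ∃ j ∈ lrCorner m n β, extendFin α j < extendFin β j ∧
      ∃ (γ : Fin (m + n + 1) → Fin (m + 1)) (γ' : Fin (m + n + 1) → Fin (n + 1)),
        IsShuffle m n γ γ' ∧
        (∀ k : Fin (m + n + 1), (k : ℕ) ≠ j → γ k = β k) ∧
        extendFin γ j + 1 = extendFin β j ∧
        IsImmPred m n γ γ' β β' ∧
        ShuffleLE m n α γ := by
  obtain ⟨hle, hne⟩ := hlt
  obtain ⟨j, hj, hlt_j⟩ := exists_mem_lrCorner_lt hα hβ fun hge => hne (le_antisymm hle hge)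
  have hγ := hβ.update_of_mem_lrCorner hj
  have hcorner : (β j : ℕ) = β (Order.pred j) + 1 := (mem_lrCorner_iff.1 hj).2.2
  have hα_le : α j ≤ β (Order.pred j) := by grind
  refine ⟨j, hj, ?_, _, _, hγ, ?_, ?_, hγ.isImmPred_of_covBy (update_covBy_of_mem_lrCorner hj), ?_⟩
  · rwa [extendFin_val, extendFin_val, ← Fin.lt_def]
  · exact fun k hk => Function.update_of_ne (Fin.ne_of_val_ne hk) _ _
  · rw [extendFin_val, extendFin_val, Function.update_self, hcorner]
  · exact le_update_iff.2 ⟨hα_le, fun k _ => hle k⟩
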